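/- Let ℰ be a UDD Gaussian triangular array with standard Normal marginals and UDD function N_ℰ(τ). Then for every p, every subset S_p ⊆ {1,…,p} with q = |S_p|, and every τ ∈ (0,1): E[max_{j∈S_p} ε_p(j)/u_q] ≥ (u_{q/N_ℰ(τ)+1}/u_q)·√(1−τ)·(1 − 2^{−q/N_ℰ(τ)} − (√(2/π)/u_{q/N_ℰ(τ)+1})·2^{−q/N_ℰ(τ)}), where u_x = Φ^{←}(1 − 1/x) for x > 1. -/

import Mathlib

open MeasureTheory ProbabilityTheory Filter Topology

/-- The standard Normal cumulative distribution function `Φ`. -/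
noncomputable def stdGaussianCDF (u : ℝ) : ℝ :=
  ∫ x in Set.Iic u, Real.exp (-x ^ 2 / 2) / Real.sqrt (2 * Real.pi)

/-- The generalized inverse (quantile function) `Φ^{←}` of the standard Normal cdf. -/
noncomputable def stdGaussianQuantile (y : ℝ) : ℝ :=
  sInf {x : ℝ | y ≤ stdGaussianCDF x}

/-- A finite family of random variables is jointly Gaussian if every linear
combination is Gaussian. -/
def IsJointGaussian {Ω : Type*} [MeasureSpace Ω] {ι : Type*} [Fintype ι]
    (X : ι → Ω → ℝ) : Prop :=
  ∀ c : ι → ℝ, ∃ m : ℝ, ∃ v : NNReal,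
    MeasureTheory.Measure.map (fun ω => ∑ i, c i * X i ω) ℙ =
      ProbabilityTheory.gaussianReal m v

/-- The covariance of two real random variables. -/
noncomputable def covar {Ω : Type*} [MeasureSpace Ω] (X Y : Ω → ℝ) : ℝ :=
  (∫ ω, X ω * Y ω ∂ℙ) - (∫ ω, X ω ∂ℙ) * (∫ ω, Y ω ∂ℙ)

lemma stdGaussianCDF_eq_integral (u : ℝ) :
    stdGaussianCDF u = ∫ x in Set.Iic u, gaussianPDFReal 0 1 x := by
  unfold stdGaussianCDF
  congr 1 with x
  simp [gaussianPDFReal]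
  ring_nf

lemma stdGaussianCDF_eq_real (u : ℝ) :
    stdGaussianCDF u = (gaussianReal 0 1).real (Set.Iic u) := by
  rw [stdGaussianCDF_eq_integral, measureReal_def,
    gaussianReal_apply_eq_integral _ one_ne_zero, ENNReal.toReal_ofReal]
  exact integral_nonneg fun x => gaussianPDFReal_nonneg _ _ _

lemma stdGaussianCDF_eq_cdf (u : ℝ) : stdGaussianCDF u = cdf (gaussianReal 0 1) u := by
  rw [stdGaussianCDF_eq_real, cdf_eq_real]

lemma continuous_gaussianPDFReal_std : Continuous (gaussianPDFReal 0 1) := by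
  unfold gaussianPDFReal
  fun_prop

lemma hasDerivAt_stdGaussianCDF (u : ℝ) :
    HasDerivAt stdGaussianCDF (gaussianPDFReal 0 1 u) u := by
  have h_int := integrable_gaussianPDFReal 0 1
  have heq : stdGaussianCDF =
      fun v => stdGaussianCDF 0 + ∫ x in (0 : ℝ)..v, gaussianPDFReal 0 1 x := by
    funext v
    rw [stdGaussianCDF_eq_integral, stdGaussianCDF_eq_integral,
      ← intervalIntegral.integral_Iic_sub_Iic h_int.integrableOn h_int.integrableOn]
    ring
  rw [heq]
  exact (intervalIntegral.integral_hasDerivAt_right h_int.intervalIntegrable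
    (stronglyMeasurable_gaussianPDFReal 0 1).stronglyMeasurableAtFilter
    continuous_gaussianPDFReal_std.continuousAt).const_add _

lemma continuous_stdGaussianCDF : Continuous stdGaussianCDF :=
  continuous_iff_continuousAt.2 fun u => (hasDerivAt_stdGaussianCDF u).continuousAt

lemma strictMono_stdGaussianCDF : StrictMono stdGaussianCDF :=
  strictMono_of_deriv_pos fun u => by
    rw [(hasDerivAt_stdGaussianCDF u).deriv]
    exact gaussianPDFReal_pos _ _ _ one_ne_zero

lemma stdGaussianCDF_nonneg (u : ℝ) : 0 ≤ stdGaussianCDF u := by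
  rw [stdGaussianCDF_eq_real]; positivity

lemma stdGaussianCDF_le_one (u : ℝ) : stdGaussianCDF u ≤ 1 := by
  rw [stdGaussianCDF_eq_real]; exact measureReal_le_one

lemma tendsto_stdGaussianCDF_atTop : Tendsto stdGaussianCDF atTop (𝓝 1) := by
  exact (tendsto_cdf_atTop (gaussianReal 0 1)).congr fun u => (stdGaussianCDF_eq_cdf u).symm

lemma tendsto_stdGaussianCDF_atBot : Tendsto stdGaussianCDF atBot (𝓝 0) := by
  exact (tendsto_cdf_atBot (gaussianReal 0 1)).congr fun u => (stdGaussianCDF_eq_cdf u).symm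

lemma stdGaussianCDF_zero : stdGaussianCDF 0 = 1 / 2 := by
  have h_int := integrable_gaussianPDFReal 0 1
  have hsymm : ∫ x in Set.Ioi (0 : ℝ), gaussianPDFReal 0 1 x = stdGaussianCDF 0 := by
    rw [stdGaussianCDF_eq_integral]
    have h := integral_comp_neg_Iic 0 (gaussianPDFReal 0 1)
    rw [neg_zero] at h
    rw [← h]
    simp [gaussianPDFReal]
  have h := integral_add_compl (s := Set.Iic (0 : ℝ)) measurableSet_Iic h_int
  rw [Set.compl_Iic, hsymm, ← stdGaussianCDF_eq_integral,
    integral_gaussianPDFReal_eq_one 0 one_ne_zero] at h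
  linarith

lemma stdGaussianQuantile_stdGaussianCDF (u : ℝ) :
    stdGaussianQuantile (stdGaussianCDF u) = u := by
  have : {x : ℝ | stdGaussianCDF u ≤ stdGaussianCDF x} = Set.Ici u := by
    ext x
    simp [strictMono_stdGaussianCDF.le_iff_le]
  rw [stdGaussianQuantile, this, csInf_Ici]

lemma stdGaussianCDF_stdGaussianQuantile {y : ℝ} (h0 : 0 < y) (h1 : y < 1) :
    stdGaussianCDF (stdGaussianQuantile y) = y := by
  obtain ⟨u, rfl⟩ : ∃ u, stdGaussianCDF u = y := mem_range_of_exists_le_of_exists_ge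
    continuous_stdGaussianCDF
    ((tendsto_stdGaussianCDF_atBot.eventually_le_const h0).exists)
    ((tendsto_stdGaussianCDF_atTop.eventually_const_le h1).exists)
  rw [stdGaussianQuantile_stdGaussianCDF]

lemma hasDerivAt_gaussianPDFReal_std (x : ℝ) :
    HasDerivAt (gaussianPDFReal 0 1) (-(x * gaussianPDFReal 0 1 x)) x := by
  unfold gaussianPDFReal
  have h : HasDerivAt (fun y : ℝ => -(y - 0) ^ 2 / (2 * ((1 : NNReal) : ℝ))) (-x) x := by
    have := (((hasDerivAt_id x).sub_const 0).pow 2).neg.div_const (2 * ((1 : NNReal) : ℝ))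
    exact this.congr_deriv (by simp; ring)
  exact (h.exp.const_mul _).congr_deriv (by ring)

lemma integral_gaussianReal_std (f : ℝ → ℝ) :
    ∫ x, f x ∂(gaussianReal 0 1) = ∫ x, f x * gaussianPDFReal 0 1 x := by
  rw [integral_gaussianReal_eq_integral_smul one_ne_zero]
  simp [mul_comm]

lemma integrable_gaussianReal_std_iff (f : ℝ → ℝ) :
    Integrable f (gaussianReal 0 1) ↔ Integrable (fun x => f x * gaussianPDFReal 0 1 x) := by
  rw [gaussianReal_of_var_ne_zero _ one_ne_zero,
    integrable_withDensity_iff (measurable_gaussianPDF 0 1) (ae_of_all _ fun x => gaussianPDF_lt_top)]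
  simp

/-- Stein's identity for the standard Gaussian distribution. -/
lemma integral_mul_gaussianReal_eq_integral_deriv {h h' : ℝ → ℝ} {C C' : ℝ}
    (hd : ∀ x, HasDerivAt h (h' x) x) (hb : ∀ x, |h x| ≤ C) (hb' : ∀ x, |h' x| ≤ C')
    (hm : Measurable h') :
    ∫ x, x * h x ∂(gaussianReal 0 1) = ∫ x, h' x ∂(gaussianReal 0 1) := by
  have hc : Continuous h := continuous_iff_continuousAt.2 fun x => (hd x).continuousAt
  have hid : Integrable (fun x : ℝ => x) (gaussianReal 0 1) := IsGaussian.integrable_id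
  have i1 : Integrable (fun x => x * h x) (gaussianReal 0 1) :=
    hid.mul_bdd hc.aestronglyMeasurable (ae_of_all _ hb)
  have i2 : Integrable h' (gaussianReal 0 1) :=
    Integrable.of_bound hm.aestronglyMeasurable C' (ae_of_all _ hb')
  have i3 : Integrable h (gaussianReal 0 1) :=
    Integrable.of_bound hc.aestronglyMeasurable C (ae_of_all _ hb)
  rw [integrable_gaussianReal_std_iff] at i1 i2 i3
  have := integral_mul_deriv_eq_deriv_mul_of_integrable (u := h) (u' := h')
    (v := gaussianPDFReal 0 1) (fun x _ => hd x)
    (fun x _ => hasDerivAt_gaussianPDFReal_std x)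
    (by refine i1.neg.congr (ae_of_all _ fun x => ?_); simp; ring) i2 i3
  rw [integral_gaussianReal_std, integral_gaussianReal_std, ← neg_eq_iff_eq_neg.2 this,
    ← integral_neg]
  congr 1 with x
  ring

lemma integral_stdGaussianCDF_pow (m : ℕ) :
    ∫ x, stdGaussianCDF x ^ m ∂(gaussianReal 0 1) = 1 / (m + 1) := by
  rw [integral_gaussianReal_std]
  have hi : Integrable (fun x => stdGaussianCDF x ^ m * gaussianPDFReal 0 1 x) := by
    rw [← integrable_gaussianReal_std_iff]
    refine Integrable.of_bound (continuous_stdGaussianCDF.pow m).aestronglyMeasurable 1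
      (ae_of_all _ fun x => ?_)
    rw [Real.norm_eq_abs, abs_pow, abs_of_nonneg (stdGaussianCDF_nonneg x)]
    exact pow_le_one₀ (stdGaussianCDF_nonneg x) (stdGaussianCDF_le_one x)
  have hm : (m + 1 : ℝ) ≠ 0 := by positivity
  have := integral_of_hasDerivAt_of_tendsto (f := fun x => stdGaussianCDF x ^ (m + 1) / (m + 1))
    (m := 0) (n := 1 / (m + 1)) (fun x => by
      refine (((hasDerivAt_stdGaussianCDF x).pow (m + 1)).div_const (m + 1 : ℝ)).congr_deriv ?_
      push_cast
      field_simp) hi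
    (by simpa using (tendsto_stdGaussianCDF_atBot.pow (m + 1)).div_const (m + 1 : ℝ))
    (by simpa using (tendsto_stdGaussianCDF_atTop.pow (m + 1)).div_const (m + 1 : ℝ))
  simpa using this

lemma setIntegral_Iic_gaussianReal_std :
    ∫ x in Set.Iic 0, x ∂(gaussianReal 0 1) = -(Real.sqrt (2 / Real.pi) / 2) := by
  have hid : Integrable (fun x : ℝ => x) (gaussianReal 0 1) := IsGaussian.integrable_id
  rw [integrable_gaussianReal_std_iff] at hid
  have ht : Tendsto (gaussianPDFReal 0 1) atBot (𝓝 0) := by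
    have h2 : Tendsto (fun x : ℝ => x ^ 2) atBot atTop := by
      refine ((tendsto_pow_atTop (α := ℝ) two_ne_zero).comp tendsto_abs_atBot_atTop).congr
        fun x => by simp
    have := (Real.tendsto_exp_neg_atTop_nhds_zero.comp (h2.atTop_div_const two_pos)).const_mul
      (Real.sqrt (2 * Real.pi))⁻¹
    simp only [mul_zero] at this
    refine this.congr fun x => ?_
    simp [gaussianPDFReal, neg_div]
  rw [← integral_indicator measurableSet_Iic, integral_gaussianReal_std]
  have h := integral_Iic_of_hasDerivAt_of_tendsto' (a := (0 : ℝ))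
    (fun x _ => (hasDerivAt_gaussianPDFReal_std x)) hid.neg.integrableOn ht
  have e : ∀ x : ℝ, (Set.Iic (0 : ℝ)).indicator (fun x => x) x * gaussianPDFReal 0 1 x =
      (Set.Iic (0 : ℝ)).indicator (fun x => x * gaussianPDFReal 0 1 x) x := fun x => by
    by_cases hx : x ≤ 0 <;> simp [hx]
  simp_rw [e]
  rw [integral_indicator measurableSet_Iic, ← neg_inj, ← integral_neg, h]
  simp only [gaussianPDFReal, sub_self, neg_neg]
  have hpi := Real.pi_pos
  have : (Real.sqrt (2 * Real.pi))⁻¹ = Real.sqrt (2 / Real.pi) / 2 := by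
    rw [Real.sqrt_mul (by norm_num), Real.sqrt_div (by norm_num)]
    have h2 : Real.sqrt 2 * Real.sqrt 2 = 2 := Real.mul_self_sqrt (by norm_num)
    have : Real.sqrt 2 ≠ 0 := by positivity
    have : Real.sqrt Real.pi ≠ 0 := by positivity
    field_simp
    linarith
  simpa using this

lemma gaussianPDFReal_std_le {x y : ℝ} (hx : 0 ≤ x) (hxy : x ≤ y) :
    gaussianPDFReal 0 1 y ≤ gaussianPDFReal 0 1 x := by
  unfold gaussianPDFReal
  gcongr

/-- On the nonnegative half-line, where `Φ` is concave, its graph lies below its tangents. -/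
lemma stdGaussianCDF_sub_le {u z : ℝ} (hu : 0 ≤ u) (hz : 0 ≤ z) :
    stdGaussianCDF z - stdGaussianCDF u ≤ gaussianPDFReal 0 1 u * (z - u) := by
  rcases lt_trichotomy u z with h | rfl | h
  · obtain ⟨c, hc, he⟩ := exists_hasDerivAt_eq_slope stdGaussianCDF (gaussianPDFReal 0 1) h
      continuous_stdGaussianCDF.continuousOn fun x _ => hasDerivAt_stdGaussianCDF x
    rw [eq_div_iff (by linarith)] at he
    rw [← he]
    exact mul_le_mul_of_nonneg_right (gaussianPDFReal_std_le hu hc.1.le) (by linarith)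
  · simp
  · obtain ⟨c, hc, he⟩ := exists_hasDerivAt_eq_slope stdGaussianCDF (gaussianPDFReal 0 1) h
      continuous_stdGaussianCDF.continuousOn fun x _ => hasDerivAt_stdGaussianCDF x
    rw [eq_div_iff (by linarith)] at he
    have := mul_le_mul_of_nonneg_right (gaussianPDFReal_std_le (by linarith [hc.1]) hc.2.le)
      (by linarith : 0 ≤ u - z)
    linarith

/-- The maximum of a nonempty finite family of reals. -/
noncomputable def finMax {ι : Type*} [Fintype ι] [Nonempty ι] (x : ι → ℝ) : ℝ :=
  Finset.univ.sup' Finset.univ_nonempty x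

section FinMax

variable {ι : Type*} [Fintype ι] [Nonempty ι]

lemma le_finMax (x : ι → ℝ) (i : ι) : x i ≤ finMax x :=
  Finset.le_sup' x (Finset.mem_univ i)

lemma finMax_le_iff {x : ι → ℝ} {t : ℝ} : finMax x ≤ t ↔ ∀ i, x i ≤ t := by
  simp [finMax, Finset.sup'_le_iff]

lemma exists_eq_finMax (x : ι → ℝ) : ∃ i, x i = finMax x := by
  obtain ⟨i, -, hi⟩ := Finset.exists_mem_eq_sup' Finset.univ_nonempty x
  exact ⟨i, hi.symm⟩

lemma finMax_const_mul {c : ℝ} (hc : 0 ≤ c) (x : ι → ℝ) :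
    finMax (fun i => c * x i) = c * finMax x := by
  refine le_antisymm (finMax_le_iff.2 fun i =>
    mul_le_mul_of_nonneg_left (le_finMax x i) hc) ?_
  obtain ⟨i, hi⟩ := exists_eq_finMax x
  rw [← hi]
  exact le_finMax (fun i => c * x i) i

lemma measurable_finMax : Measurable (finMax : (ι → ℝ) → ℝ) := by
  have : Continuous (finMax : (ι → ℝ) → ℝ) :=
    Continuous.finset_sup'_apply _ fun i _ => continuous_apply i
  exact this.measurable

lemma abs_finMax_le (x : ι → ℝ) : |finMax x| ≤ ∑ i, |x i| := by
  obtain ⟨i, hi⟩ := exists_eq_finMax x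
  rw [← hi]
  exact Finset.single_le_sum (f := fun i => |x i|) (fun j _ => abs_nonneg _) (Finset.mem_univ i)

lemma integrable_finMax {α : Type*} [MeasurableSpace α] {μ : Measure α} {X : α → ι → ℝ}
    (hX : ∀ i, Integrable (fun a => X a i) μ) : Integrable (fun a => finMax (X a)) μ := by
  refine (integrable_finsetSum Finset.univ fun i _ => (hX i).abs).mono'
    (measurable_finMax.comp_aemeasurable
      (aemeasurable_pi_iff.2 fun i => (hX i).aemeasurable)).aestronglyMeasurable
    (ae_of_all _ fun a => abs_finMax_le _)

end FinMax

/-- The law of a family of independent standard Gaussian variables. -/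
noncomputable abbrev stdGaussianPi (κ : Type*) [Fintype κ] : Measure (κ → ℝ) :=
  Measure.pi fun _ => gaussianReal 0 1

lemma integrable_eval_stdGaussianPi {κ : Type*} [Fintype κ] (k : κ) :
    Integrable (fun g : κ → ℝ => g k) (stdGaussianPi κ) :=
  integrable_eval (μ := fun _ : κ => gaussianReal 0 1) IsGaussian.integrable_id

section IID

variable {ι : Type*} [Fintype ι] [Nonempty ι]

lemma stdGaussianPi_finMax_le (t : ℝ) :
    stdGaussianPi ι {g | finMax g ≤ t} =
      ENNReal.ofReal (stdGaussianCDF t ^ Fintype.card ι) := by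
  have : {g : ι → ℝ | finMax g ≤ t} = Set.pi Set.univ fun _ => Set.Iic t := by
    ext g
    simp [finMax_le_iff, Pi.le_def]
  rw [this, Measure.pi_pi, Finset.prod_const, Finset.card_univ, stdGaussianCDF_eq_real,
    ENNReal.ofReal_pow (by positivity), ofReal_measureReal]

lemma integrable_stdGaussianCDF_comp {α : Type*} [MeasurableSpace α] {μ : Measure α}
    [IsFiniteMeasure μ] {f : α → ℝ} (hf : Measurable f) :
    Integrable (fun a => stdGaussianCDF (f a)) μ := by
  refine Integrable.of_bound
    (continuous_stdGaussianCDF.measurable.comp hf).aestronglyMeasurable 1 (ae_of_all _ fun a => ?_)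
  rw [Real.norm_eq_abs, abs_of_nonneg (stdGaussianCDF_nonneg _)]
  exact stdGaussianCDF_le_one _

lemma le_integral_stdGaussianCDF_finMax :
    (Fintype.card ι : ℝ) / (Fintype.card ι + 1) ≤
      ∫ g, stdGaussianCDF (finMax g) ∂(stdGaussianPi ι) := by
  set m := Fintype.card ι
  have hT : MeasurableSet {q : ℝ × (ι → ℝ) | finMax q.2 ≤ q.1} :=
    measurableSet_le (measurable_finMax.comp measurable_snd) measurable_fst
  have hi : Integrable (fun g : ι → ℝ => 1 - stdGaussianCDF (finMax g)) (stdGaussianPi ι) :=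
    (integrable_const 1).sub (integrable_stdGaussianCDF_comp measurable_finMax)
  have h1 : ((gaussianReal 0 1).prod (stdGaussianPi ι)) {q | finMax q.2 ≤ q.1} =
      ENNReal.ofReal (1 / (m + 1)) := by
    rw [Measure.prod_apply hT, ← integral_stdGaussianCDF_pow,
      ofReal_integral_eq_lintegral_ofReal]
    · exact lintegral_congr fun z => stdGaussianPi_finMax_le z
    · refine Integrable.of_bound (continuous_stdGaussianCDF.pow m).aestronglyMeasurable 1
        (ae_of_all _ fun x => ?_)
      rw [Real.norm_eq_abs, abs_pow, abs_of_nonneg (stdGaussianCDF_nonneg x)]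
      exact pow_le_one₀ (stdGaussianCDF_nonneg x) (stdGaussianCDF_le_one x)
    · exact ae_of_all _ fun x => pow_nonneg (stdGaussianCDF_nonneg x) m
  have h2 : ENNReal.ofReal (∫ g, (1 - stdGaussianCDF (finMax g)) ∂(stdGaussianPi ι)) ≤
      ENNReal.ofReal (1 / (m + 1)) := by
    rw [← h1, Measure.prod_apply_symm hT, ofReal_integral_eq_lintegral_ofReal hi
      (ae_of_all _ fun g => sub_nonneg.2 (stdGaussianCDF_le_one _))]
    refine lintegral_mono fun g => ?_
    have : stdGaussianCDF (finMax g) = 1 - (gaussianReal 0 1).real (Set.Ioi (finMax g)) := by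
      rw [stdGaussianCDF_eq_real, ← Set.compl_Iic, probReal_compl_eq_one_sub measurableSet_Iic]
      ring
    rw [this, sub_sub_cancel, ofReal_measureReal]
    exact measure_mono fun z hz => (Set.mem_Ioi.1 hz).le
  rw [ENNReal.ofReal_le_ofReal_iff (by positivity),
    integral_sub (integrable_const 1) (integrable_stdGaussianCDF_comp measurable_finMax)] at h2
  have : (m : ℝ) / (m + 1) = 1 - 1 / (m + 1) := by field_simp; ring
  simp only [integral_const, probReal_univ, smul_eq_mul, mul_one] at h2
  linarith

lemma integral_indicator_finMax_nonpos (i : ι) :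
    ∫ g, {g : ι → ℝ | finMax g ≤ 0}.indicator (fun g => g i) g ∂(stdGaussianPi ι) =
      -(Real.sqrt (2 / Real.pi) * (1 / 2) ^ Fintype.card ι) := by
  classical
  have h : ∀ g : ι → ℝ, {g : ι → ℝ | finMax g ≤ 0}.indicator (fun g => g i) g =
      ∏ j, (Set.Iic (0 : ℝ)).indicator (fun x => if j = i then x else 1) (g j) := by
    intro g
    by_cases hg : finMax g ≤ 0
    · have hg' := finMax_le_iff.1 hg
      simp [hg, hg']
    · have hg' := hg
      rw [finMax_le_iff] at hg'
      push Not at hg'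
      obtain ⟨j, hj⟩ := hg'
      rw [Set.indicator_of_notMem (by simpa using hg)]
      exact (Finset.prod_eq_zero (Finset.mem_univ j)
        (Set.indicator_of_notMem (Set.notMem_Iic.2 hj) _)).symm
  simp_rw [h]
  rw [integral_fintype_prod_eq_prod
    (fun j x => (Set.Iic (0 : ℝ)).indicator (fun x => if j = i then x else 1) x)]
  have hj : ∀ j ∈ Finset.univ.erase i,
      ∫ x, (Set.Iic (0 : ℝ)).indicator (fun x => if j = i then x else 1) x ∂(gaussianReal 0 1) =
        1 / 2 := by
    intro j hj
    simp only [Finset.ne_of_mem_erase hj, if_false]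
    rw [integral_indicator measurableSet_Iic]
    simp [← stdGaussianCDF_eq_real, stdGaussianCDF_zero]
  rw [← Finset.mul_prod_erase _ _ (Finset.mem_univ i), Finset.prod_congr rfl hj,
    Finset.prod_const, Finset.card_erase_of_mem (Finset.mem_univ i), Finset.card_univ]
  simp only [if_true]
  rw [integral_indicator measurableSet_Iic, setIntegral_Iic_gaussianReal_std]
  obtain ⟨n, hn⟩ := Nat.exists_eq_succ_of_ne_zero (Fintype.card_ne_zero (α := ι))
  rw [hn, Nat.succ_sub_one, pow_succ]
  ring

/-- A lower bound on the expected maximum of independent standard Gaussian variables. -/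
lemma le_integral_finMax_stdGaussianPi {u : ℝ} (hu : 0 ≤ u)
    (hΦ : stdGaussianCDF u ≤ Fintype.card ι / (Fintype.card ι + 1)) :
    u * (1 - (1 / 2) ^ Fintype.card ι) - Real.sqrt (2 / Real.pi) * (1 / 2) ^ Fintype.card ι ≤
      ∫ g, finMax g ∂(stdGaussianPi ι) := by
  have i : ι := Classical.arbitrary ι
  set φ := gaussianPDFReal 0 1 u
  have hφ : 0 < φ := gaussianPDFReal_pos _ _ _ one_ne_zero
  set E : Set (ι → ℝ) := {g | finMax g ≤ 0}
  have hE : MeasurableSet E := measurableSet_le measurable_finMax measurable_const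
  have hPE : (stdGaussianPi ι).real E = (1 / 2) ^ Fintype.card ι := by
    rw [measureReal_def, stdGaussianPi_finMax_le, stdGaussianCDF_zero,
      ENNReal.toReal_ofReal (by positivity)]
  have hpt : ∀ g : ι → ℝ, Eᶜ.indicator (fun _ => u) g +
      (stdGaussianCDF (finMax g) - stdGaussianCDF u) / φ + E.indicator (fun g => g i) g ≤
        finMax g := by
    intro g
    by_cases hg : finMax g ≤ 0
    · have hgE : g ∈ E := hg
      have hmono := strictMono_stdGaussianCDF.monotone (hg.trans hu)
      have : (stdGaussianCDF (finMax g) - stdGaussianCDF u) / φ ≤ 0 :=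
        div_nonpos_of_nonpos_of_nonneg (by linarith) hφ.le
      simp only [Set.indicator_of_mem hgE, Set.mem_compl_iff, hgE, not_true_eq_false,
        not_false_eq_true, Set.indicator_of_notMem]
      linarith [le_finMax g i]
    · have hgE : g ∉ E := hg
      have h := stdGaussianCDF_sub_le hu (not_le.1 hg).le
      have : (stdGaussianCDF (finMax g) - stdGaussianCDF u) / φ ≤ finMax g - u := by
        rw [div_le_iff₀ hφ]
        linarith
      rw [Set.indicator_of_mem (show g ∈ Eᶜ from hgE), Set.indicator_of_notMem hgE]
      linarith
  have i1 : Integrable (Eᶜ.indicator (fun _ => u)) (stdGaussianPi ι) :=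
    (integrable_const u).indicator hE.compl
  have i2 : Integrable (fun g : ι → ℝ => (stdGaussianCDF (finMax g) - stdGaussianCDF u) / φ)
      (stdGaussianPi ι) :=
    ((integrable_stdGaussianCDF_comp measurable_finMax).sub (integrable_const _)).div_const φ
  have i3 : Integrable (E.indicator (fun g => g i)) (stdGaussianPi ι) :=
    (integrable_eval_stdGaussianPi i).indicator hE
  have hle := integral_mono ((i1.add i2).add i3)
    (integrable_finMax fun j => integrable_eval_stdGaussianPi j) hpt
  rw [integral_add' (i1.add i2) i3, integral_indicator_finMax_nonpos,
    integral_add' i1 i2, integral_indicator hE.compl,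
    integral_div, integral_sub (integrable_stdGaussianCDF_comp measurable_finMax)
      (integrable_const _)] at hle
  simp only [integral_const, probReal_univ, smul_eq_mul, one_mul,
    measureReal_restrict_apply MeasurableSet.univ, Set.univ_inter,
    probReal_compl_eq_one_sub hE, hPE] at hle
  have : 0 ≤ (∫ g, stdGaussianCDF (finMax g) ∂(stdGaussianPi ι) - stdGaussianCDF u) / φ :=
    div_nonneg (by linarith [le_integral_stdGaussianCDF_finMax (ι := ι)]) hφ.le
  linarith

end IID

section GaussianIntegrationByParts

variable {κ : Type*} [Fintype κ]

lemma measurePreserving_update_stdGaussianPi [DecidableEq κ] (k : κ) :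
    MeasurePreserving (fun q : ℝ × (κ → ℝ) => Function.update q.2 k q.1)
      ((gaussianReal 0 1).prod (stdGaussianPi κ)) (stdGaussianPi κ) := by
  have hm : Measurable fun q : ℝ × (κ → ℝ) => Function.update q.2 k q.1 := by
    refine measurable_pi_iff.2 fun j => ?_
    by_cases hj : j = k
    · subst hj
      simpa using measurable_fst
    · simp only [Function.update_of_ne hj]
      exact (measurable_pi_apply j).comp measurable_snd
  refine ⟨hm, (Measure.pi_eq fun s hs => ?_).symm⟩
  rw [Measure.map_apply hm (MeasurableSet.univ_pi hs)]
  have : (fun q : ℝ × (κ → ℝ) => Function.update q.2 k q.1) ⁻¹' Set.pi Set.univ s =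
      s k ×ˢ Set.pi Set.univ (Function.update s k Set.univ) := by
    ext q
    simp only [Set.mem_preimage, Set.mem_pi, Set.mem_univ, true_implies, Set.mem_prod]
    constructor
    · refine fun h => ⟨by simpa using h k, fun j => ?_⟩
      by_cases hj : j = k
      · subst hj; simp
      · simpa [Function.update_of_ne hj] using h j
    · rintro ⟨h1, h2⟩ j
      by_cases hj : j = k
      · subst hj; simpa using h1
      · simpa [Function.update_of_ne hj] using h2 j
  rw [this, Measure.prod_prod, Measure.pi_pi, ← Finset.mul_prod_erase _ _ (Finset.mem_univ k),
    ← Finset.mul_prod_erase (Finset.univ : Finset κ) (fun j => gaussianReal 0 1 (s j))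
      (Finset.mem_univ k)]
  have hp : ∏ j ∈ Finset.univ.erase k, gaussianReal 0 1 (Function.update s k Set.univ j) =
      ∏ j ∈ Finset.univ.erase k, gaussianReal 0 1 (s j) :=
    Finset.prod_congr rfl fun j hj => by rw [Function.update_of_ne (Finset.ne_of_mem_erase hj)]
  rw [hp]
  simp

/-- Gaussian integration by parts in the `k`-th coordinate. -/
lemma integral_eval_mul_stdGaussianPi [DecidableEq κ] (k : κ) {F F' : (κ → ℝ) → ℝ} {C C' : ℝ}
    (hF : Measurable F) (hF' : Measurable F')
    (hb : ∀ g, |F g| ≤ C) (hb' : ∀ g, |F' g| ≤ C')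
    (hd : ∀ g x, HasDerivAt (fun y => F (Function.update g k y)) (F' (Function.update g k x)) x) :
    ∫ g, g k * F g ∂(stdGaussianPi κ) = ∫ g, F' g ∂(stdGaussianPi κ) := by
  have hmp := measurePreserving_update_stdGaussianPi k
  have i1 : Integrable (fun g : κ → ℝ => g k * F g) (stdGaussianPi κ) :=
    (integrable_eval_stdGaussianPi k).mul_bdd hF.aestronglyMeasurable (ae_of_all _ hb)
  have i2 : Integrable F' (stdGaussianPi κ) :=
    Integrable.of_bound hF'.aestronglyMeasurable C' (ae_of_all _ hb')
  have key : ∀ G : (κ → ℝ) → ℝ, Integrable G (stdGaussianPi κ) →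
      ∫ g, G g ∂(stdGaussianPi κ) =
        ∫ g, ∫ x, G (Function.update g k x) ∂(gaussianReal 0 1) ∂(stdGaussianPi κ) := by
    intro G hG
    have hG' := hmp.integrable_comp_of_integrable hG
    refine Eq.trans ?_ (integral_prod_symm _ hG')
    conv_lhs => rw [← hmp.map_eq]
    rw [integral_map hmp.measurable.aemeasurable (by rw [hmp.map_eq]; exact hG.1)]
    rfl
  rw [key _ i1, key _ i2]
  congr 1 with g
  simp only [Function.update_self]
  refine integral_mul_gaussianReal_eq_integral_deriv (hd g) (fun x => hb _) (fun x => hb' _) ?_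
  exact hF'.comp (measurable_update g)

end GaussianIntegrationByParts

section LogSumExp

variable {ι : Type*} [Fintype ι]

/-- The logarithm of the sum of exponentials, a smooth approximation of the maximum. -/
noncomputable def logSumExp (x : ι → ℝ) : ℝ := Real.log (∑ i, Real.exp (x i))

/-- The gradient of `logSumExp`. -/
noncomputable def softmax (x : ι → ℝ) (i : ι) : ℝ := Real.exp (x i) / ∑ j, Real.exp (x j)

lemma measurable_logSumExp : Measurable (logSumExp : (ι → ℝ) → ℝ) := by
  unfold logSumExp
  fun_prop

lemma measurable_softmax (i : ι) : Measurable fun x : ι → ℝ => softmax x i := by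
  unfold softmax
  fun_prop

lemma softmax_nonneg (x : ι → ℝ) (i : ι) : 0 ≤ softmax x i := by
  unfold softmax
  positivity

variable [Nonempty ι]

lemma sum_exp_pos (x : ι → ℝ) : 0 < ∑ i, Real.exp (x i) :=
  Finset.sum_pos (fun _ _ => Real.exp_pos _) Finset.univ_nonempty

lemma sum_softmax (x : ι → ℝ) : ∑ i, softmax x i = 1 := by
  unfold softmax
  rw [← Finset.sum_div, div_self (sum_exp_pos x).ne']

lemma softmax_le_one (x : ι → ℝ) (i : ι) : softmax x i ≤ 1 := by
  rw [← sum_softmax x]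
  exact Finset.single_le_sum (fun j _ => softmax_nonneg x j) (Finset.mem_univ i)

lemma abs_softmax_le_one (x : ι → ℝ) (i : ι) : |softmax x i| ≤ 1 := by
  rw [abs_of_nonneg (softmax_nonneg x i)]
  exact softmax_le_one x i

lemma finMax_le_logSumExp (x : ι → ℝ) : finMax x ≤ logSumExp x := by
  obtain ⟨i, hi⟩ := exists_eq_finMax x
  rw [← hi, logSumExp, Real.le_log_iff_exp_le (sum_exp_pos x)]
  exact Finset.single_le_sum (f := fun i => Real.exp (x i)) (fun j _ => (Real.exp_pos _).le)
    (Finset.mem_univ i)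

lemma logSumExp_le (x : ι → ℝ) : logSumExp x ≤ finMax x + Real.log (Fintype.card ι) := by
  have hc : (0 : ℝ) < Fintype.card ι := by exact_mod_cast Fintype.card_pos
  rw [logSumExp, Real.log_le_iff_le_exp (sum_exp_pos x), Real.exp_add, Real.exp_log hc]
  calc ∑ i, Real.exp (x i) ≤ ∑ _i : ι, Real.exp (finMax x) :=
        Finset.sum_le_sum fun i _ => Real.exp_le_exp.2 (le_finMax x i)
    _ = Real.exp (finMax x) * Fintype.card ι := by simp [mul_comm]

lemma integrable_logSumExp {α : Type*} [MeasurableSpace α] {μ : Measure α} [IsFiniteMeasure μ]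
    {X : α → ι → ℝ} (hX : ∀ i, Integrable (fun a => X a i) μ) :
    Integrable (fun a => logSumExp (X a)) μ := by
  refine ((integrable_finMax hX).abs.add
    (integrable_const |Real.log (Fintype.card ι)|)).mono'
    (measurable_logSumExp.comp_aemeasurable
      (aemeasurable_pi_iff.2 fun i => (hX i).aemeasurable)).aestronglyMeasurable
    (ae_of_all _ fun a => ?_)
  have h1 := finMax_le_logSumExp (X a)
  have h2 := logSumExp_le (X a)
  simp only [Pi.add_apply, Real.norm_eq_abs]
  rw [abs_le]
  constructor <;>
    linarith [neg_abs_le (finMax (X a)), le_abs_self (finMax (X a)),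
      le_abs_self (Real.log (Fintype.card ι)), abs_nonneg (Real.log (Fintype.card ι))]

lemma hasDerivAt_logSumExp {v : ℝ → ι → ℝ} {v' : ι → ℝ} {t : ℝ}
    (hv : ∀ i, HasDerivAt (fun s => v s i) (v' i) t) :
    HasDerivAt (fun s => logSumExp (v s)) (∑ i, softmax (v t) i * v' i) t := by
  have h := (HasDerivAt.fun_sum (u := Finset.univ) fun i _ => (hv i).exp).log (sum_exp_pos (v t)).ne'
  refine h.congr_deriv ?_
  rw [Finset.sum_div]
  exact Finset.sum_congr rfl fun i _ => by rw [softmax]; ring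

lemma hasDerivAt_softmax {v : ℝ → ι → ℝ} {v' : ι → ℝ} {t : ℝ}
    (hv : ∀ i, HasDerivAt (fun s => v s i) (v' i) t) (i : ι) :
    HasDerivAt (fun s => softmax (v s) i)
      (softmax (v t) i * (v' i - ∑ j, softmax (v t) j * v' j)) t := by
  have h := ((hv i).exp).div (HasDerivAt.fun_sum (u := Finset.univ) fun i _ => (hv i).exp)
    (sum_exp_pos (v t)).ne'
  refine h.congr_deriv ?_
  have hs : ∑ j, softmax (v t) j * v' j =
      (∑ j, Real.exp (v t j) * v' j) / ∑ j, Real.exp (v t j) := by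
    rw [Finset.sum_div]
    exact Finset.sum_congr rfl fun i _ => by rw [softmax]; ring
  rw [hs, softmax]
  have := (sum_exp_pos (v t)).ne'
  field_simp

end LogSumExp

section Comparison

open Matrix

variable {ι κ : Type*} [Fintype ι] [Fintype κ]

lemma integrable_mulVec_stdGaussianPi {ι : Type*} (B : Matrix ι κ ℝ) (i : ι) :
    Integrable (fun g => (B *ᵥ g) i) (stdGaussianPi κ) := by
  simp only [Matrix.mulVec, dotProduct]
  exact integrable_finsetSum _ fun k _ => (integrable_eval_stdGaussianPi k).const_mul _

lemma measurable_mulVec (B : Matrix ι κ ℝ) : Measurable fun g : κ → ℝ => B *ᵥ g :=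
  (Continuous.matrix_mulVec continuous_const continuous_id).measurable

lemma hasDerivAt_mulVec_update {ι : Type*} [DecidableEq κ] (B : Matrix ι κ ℝ) (g : κ → ℝ)
    (k : κ) (x : ℝ) (i : ι) : HasDerivAt (fun y => (B *ᵥ Function.update g k y) i) (B i k) x := by
  have h : ∀ j, HasDerivAt (fun y => B i j * Function.update g k y j)
      (B i j * if j = k then 1 else 0) x := fun j => by
    refine HasDerivAt.const_mul _ ?_
    by_cases hj : j = k
    · subst hj
      simp only [Function.update_self, if_true]
      exact hasDerivAt_id' x
    · simpa [Function.update_of_ne hj, hj] using hasDerivAt_const x (g j)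
  simpa [Matrix.mulVec, dotProduct] using HasDerivAt.fun_sum (u := Finset.univ) fun j _ => h j

lemma integral_sum_sum_const_mul {α : Type*} [MeasurableSpace α] {μ : Measure α}
    (D : Matrix ι κ ℝ) {f : ι → κ → α → ℝ} (hf : ∀ i k, Integrable (fun a => f i k a) μ) :
    ∫ a, ∑ i, ∑ k, D i k * f i k a ∂μ = ∑ i, ∑ k, D i k * ∫ a, f i k a ∂μ := by
  have h : ∀ i k, Integrable (fun a => D i k * f i k a) μ := fun i k => (hf i k).const_mul _
  rw [integral_finsetSum _ fun i _ => integrable_finsetSum _ fun k _ => h i k]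
  refine Finset.sum_congr rfl fun i _ => ?_
  rw [integral_finsetSum _ fun k _ => h i k]
  simp_rw [integral_const_mul]

variable [Nonempty ι]

lemma integral_eval_mul_softmax (B : Matrix ι κ ℝ) (i : ι) (k : κ) :
    ∫ g, g k * softmax (B *ᵥ g) i ∂(stdGaussianPi κ) =
      ∫ g, softmax (B *ᵥ g) i * (B i k - ∑ j, softmax (B *ᵥ g) j * B j k)
        ∂(stdGaussianPi κ) := by
  classical
  have hs : ∀ j, Measurable fun g : κ → ℝ => softmax (B *ᵥ g) j :=
    fun j => (measurable_softmax j).comp (measurable_mulVec B)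
  refine integral_eval_mul_stdGaussianPi (C := 1) (C' := |B i k| + ∑ j, |B j k|) k (hs i) ?_
    (fun g => abs_softmax_le_one _ _) ?_
    (fun g x => hasDerivAt_softmax (fun j => hasDerivAt_mulVec_update B g k x j) i)
  · exact (hs i).mul (measurable_const.sub
      (Finset.measurable_fun_sum _ fun j _ => (hs j).mul_const _))
  · intro g
    rw [abs_mul]
    refine (mul_le_of_le_one_left (abs_nonneg _) (abs_softmax_le_one _ _)).trans
      ((abs_sub _ _).trans ?_)
    gcongr
    refine (Finset.abs_sum_le_sum_abs _ _).trans (Finset.sum_le_sum fun j _ => ?_)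
    rw [abs_mul]
    exact mul_le_of_le_one_left (abs_nonneg _) (abs_softmax_le_one _ _)

lemma integral_sum_softmax_mul_mulVec_nonpos (B D : Matrix ι κ ℝ)
    (h : ∀ i j, (D * Bᵀ) i i ≤ (D * Bᵀ) i j) :
    ∫ g, ∑ i, softmax (B *ᵥ g) i * (D *ᵥ g) i ∂(stdGaussianPi κ) ≤ 0 := by
  have hs : ∀ j, Measurable fun g : κ → ℝ => softmax (B *ᵥ g) j :=
    fun j => (measurable_softmax j).comp (measurable_mulVec B)
  have hbd : ∀ i, ∀ᵐ g ∂(stdGaussianPi κ), ‖softmax (B *ᵥ g) i‖ ≤ 1 :=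
    fun i => ae_of_all _ fun g => abs_softmax_le_one _ _
  have h_int : ∀ i k, Integrable (fun g : κ → ℝ => g k * softmax (B *ᵥ g) i) (stdGaussianPi κ) :=
    fun i k => (integrable_eval_stdGaussianPi k).mul_bdd (hs i).aestronglyMeasurable (hbd i)
  have hsi : ∀ i, Integrable (fun g : κ → ℝ => softmax (B *ᵥ g) i) (stdGaussianPi κ) :=
    fun i => Integrable.of_bound (hs i).aestronglyMeasurable 1 (hbd i)
  have h_int' : ∀ i k, Integrable (fun g : κ → ℝ =>
      softmax (B *ᵥ g) i * (B i k - ∑ j, softmax (B *ᵥ g) j * B j k)) (stdGaussianPi κ) :=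
    fun i k => ((integrable_const _).sub
      (integrable_finsetSum _ fun j _ => (hsi j).mul_const _)).bdd_mul
        (hs i).aestronglyMeasurable (hbd i)
  have e1 : ∀ g : κ → ℝ, ∑ i, softmax (B *ᵥ g) i * (D *ᵥ g) i =
      ∑ i, ∑ k, D i k * (g k * softmax (B *ᵥ g) i) := fun g => by
    refine Finset.sum_congr rfl fun i _ => ?_
    rw [Matrix.mulVec, dotProduct, Finset.mul_sum]
    exact Finset.sum_congr rfl fun k _ => by ring
  have e2 : ∫ g, ∑ i, softmax (B *ᵥ g) i * (D *ᵥ g) i ∂(stdGaussianPi κ) =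
      ∫ g, ∑ i, ∑ k, D i k *
        (softmax (B *ᵥ g) i * (B i k - ∑ j, softmax (B *ᵥ g) j * B j k)) ∂(stdGaussianPi κ) := by
    simp_rw [e1]
    rw [integral_sum_sum_const_mul _ h_int, integral_sum_sum_const_mul _ h_int']
    simp_rw [integral_eval_mul_softmax]
  rw [e2]
  refine integral_nonpos fun g => Finset.sum_nonpos fun i _ => ?_
  have e3 : ∑ k, D i k * (softmax (B *ᵥ g) i * (B i k - ∑ j, softmax (B *ᵥ g) j * B j k)) =
      softmax (B *ᵥ g) i * ∑ j, softmax (B *ᵥ g) j * ((D * Bᵀ) i i - (D * Bᵀ) i j) := by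
    have : ∑ j, softmax (B *ᵥ g) j * ((D * Bᵀ) i i - (D * Bᵀ) i j) =
        ∑ k, D i k * (B i k - ∑ j, softmax (B *ᵥ g) j * B j k) := by
      simp_rw [mul_sub, Finset.sum_sub_distrib, ← Finset.sum_mul, sum_softmax, one_mul,
        Matrix.mul_apply, Matrix.transpose_apply, Finset.mul_sum]
      congr 1
      rw [Finset.sum_comm]
      exact Finset.sum_congr rfl fun k _ => Finset.sum_congr rfl fun j _ => by ring
    rw [this, Finset.mul_sum]
    exact Finset.sum_congr rfl fun k _ => by ring
  simp only [e3]
  exact mul_nonpos_of_nonneg_of_nonpos (softmax_nonneg _ _) (Finset.sum_nonpos fun j _ =>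
    mul_nonpos_of_nonneg_of_nonpos (softmax_nonneg _ _) (sub_nonpos.2 (h i j)))

/-- Comparison of the expected `logSumExp` along the circular interpolation between two
independent Gaussian vectors. -/
lemma integral_logSumExp_le_of_increments (A D : Matrix ι κ ℝ) (hAD : A * Dᵀ = 0)
    (h : ∀ i j, (D * Dᵀ) i i - (D * Dᵀ) i j ≤ (A * Aᵀ) i i - (A * Aᵀ) i j) :
    ∫ g, logSumExp (D *ᵥ g) ∂(stdGaussianPi κ) ≤ ∫ g, logSumExp (A *ᵥ g) ∂(stdGaussianPi κ) := by
  have hDA : D * Aᵀ = 0 := by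
    have := congrArg Matrix.transpose hAD
    simpa using this
  set V : ℝ → Matrix ι κ ℝ := fun θ => Real.cos θ • A + Real.sin θ • D
  set V' : ℝ → Matrix ι κ ℝ := fun θ => -Real.sin θ • A + Real.cos θ • D
  have hV : ∀ g θ i, HasDerivAt (fun s => (V s *ᵥ g) i) ((V' θ *ᵥ g) i) θ := by
    intro g θ i
    simp only [V, V', Matrix.add_mulVec, Matrix.smul_mulVec, Pi.add_apply, Pi.smul_apply,
      smul_eq_mul]
    exact ((Real.hasDerivAt_cos θ).mul_const _).add ((Real.hasDerivAt_sin θ).mul_const _)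
  have hd : ∀ θ, HasDerivAt (fun s => ∫ g, logSumExp (V s *ᵥ g) ∂(stdGaussianPi κ))
      (∫ g, ∑ i, softmax (V θ *ᵥ g) i * (V' θ *ᵥ g) i ∂(stdGaussianPi κ)) θ := by
    intro θ
    refine (hasDerivAt_integral_of_dominated_loc_of_deriv_le (s := Set.univ)
      (F' := fun s g => ∑ i, softmax (V s *ᵥ g) i * (V' s *ᵥ g) i)
      (bound := fun g => ∑ i, (|(A *ᵥ g) i| + |(D *ᵥ g) i|)) univ_mem
      (Eventually.of_forall fun s =>
        (measurable_logSumExp.comp (measurable_mulVec _)).aestronglyMeasurable)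
      (integrable_logSumExp fun i => integrable_mulVec_stdGaussianPi _ i) ?_ ?_ ?_ ?_).2
    · refine (Finset.measurable_fun_sum _ fun i _ => ?_).aestronglyMeasurable
      exact ((measurable_softmax i).comp (measurable_mulVec _)).mul
        ((measurable_pi_apply i).comp (measurable_mulVec _))
    · refine ae_of_all _ fun g s _ => (Finset.abs_sum_le_sum_abs _ _).trans
        (Finset.sum_le_sum fun i _ => ?_)
      rw [abs_mul]
      refine (mul_le_of_le_one_left (abs_nonneg _) (abs_softmax_le_one _ _)).trans ?_
      simp only [V', Matrix.add_mulVec, Matrix.smul_mulVec, Pi.add_apply, Pi.smul_apply,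
        smul_eq_mul]
      refine (abs_add_le _ _).trans (add_le_add ?_ ?_) <;> rw [abs_mul]
      · rw [abs_neg]
        exact mul_le_of_le_one_left (abs_nonneg _) (Real.abs_sin_le_one s)
      · exact mul_le_of_le_one_left (abs_nonneg _) (Real.abs_cos_le_one s)
    · exact integrable_finsetSum _ fun i _ => (integrable_mulVec_stdGaussianPi A i).abs.add
        (integrable_mulVec_stdGaussianPi D i).abs
    · exact ae_of_all _ fun g s _ => hasDerivAt_logSumExp (hV g s)
  have hanti : AntitoneOn (fun s => ∫ g, logSumExp (V s *ᵥ g) ∂(stdGaussianPi κ))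
      (Set.Icc 0 (Real.pi / 2)) := by
    refine antitoneOn_of_deriv_nonpos (convex_Icc _ _)
      (fun θ _ => (hd θ).continuousAt.continuousWithinAt)
      (fun θ _ => (hd θ).differentiableAt.differentiableWithinAt) fun θ hθ => ?_
    rw [interior_Icc] at hθ
    rw [(hd θ).deriv]
    refine integral_sum_softmax_mul_mulVec_nonpos _ _ fun i j => ?_
    have hC : V' θ * (V θ)ᵀ = (Real.sin θ * Real.cos θ) • (D * Dᵀ - A * Aᵀ) := by
      simp only [V, V', Matrix.transpose_add, Matrix.transpose_smul, Matrix.add_mul,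
        Matrix.mul_add, Matrix.smul_mul, Matrix.mul_smul, hAD, hDA]
      module
    have hsin : 0 ≤ Real.sin θ * Real.cos θ := mul_nonneg
      (Real.sin_nonneg_of_nonneg_of_le_pi hθ.1.le (by linarith [hθ.2, Real.pi_pos]))
      (Real.cos_nonneg_of_neg_pi_div_two_le_of_le (by linarith [hθ.1, Real.pi_pos]) hθ.2.le)
    rw [hC]
    simp only [Matrix.smul_apply, Matrix.sub_apply, smul_eq_mul]
    exact mul_le_mul_of_nonneg_left (by linarith [h i j]) hsin
  have hpi := Real.pi_pos
  have := hanti (Set.left_mem_Icc.2 (by positivity)) (Set.right_mem_Icc.2 (by positivity))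
    (by positivity : (0 : ℝ) ≤ Real.pi / 2)
  simpa [V] using this

/-- A Sudakov–Fernique comparison for the expected maxima of two independent Gaussian vectors
given by linear images of a standard one. -/
lemma integral_finMax_le_of_increments (A D : Matrix ι κ ℝ) (hAD : A * Dᵀ = 0)
    (h : ∀ i j, (D * Dᵀ) i i - (D * Dᵀ) i j ≤ (A * Aᵀ) i i - (A * Aᵀ) i j) :
    ∫ g, finMax (D *ᵥ g) ∂(stdGaussianPi κ) ≤ ∫ g, finMax (A *ᵥ g) ∂(stdGaussianPi κ) := by
  have key : ∀ β : ℝ, 0 < β → β * ∫ g, finMax (D *ᵥ g) ∂(stdGaussianPi κ) ≤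
      β * ∫ g, finMax (A *ᵥ g) ∂(stdGaussianPi κ) + Real.log (Fintype.card ι) := by
    intro β hβ
    have hscale : ∀ (B : Matrix ι κ ℝ) (g : κ → ℝ), finMax ((β • B) *ᵥ g) =
        β * finMax (B *ᵥ g) := fun B g => by
      rw [Matrix.smul_mulVec, ← finMax_const_mul hβ.le]
      rfl
    have hcomp := integral_logSumExp_le_of_increments (β • A) (β • D) (by simp [hAD])
      (fun i j => by
        simp only [Matrix.transpose_smul, Matrix.smul_mul, Matrix.mul_smul, Matrix.smul_apply,
          smul_eq_mul]
        nlinarith [mul_le_mul_of_nonneg_left (h i j) (mul_nonneg hβ.le hβ.le)])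
    have hi : ∀ B : Matrix ι κ ℝ, ∀ i,
        Integrable (fun g => (B *ᵥ g) i) (stdGaussianPi κ) := integrable_mulVec_stdGaussianPi
    calc β * ∫ g, finMax (D *ᵥ g) ∂(stdGaussianPi κ)
        = ∫ g, finMax ((β • D) *ᵥ g) ∂(stdGaussianPi κ) := by
          simp_rw [hscale, integral_const_mul]
      _ ≤ ∫ g, logSumExp ((β • D) *ᵥ g) ∂(stdGaussianPi κ) :=
          integral_mono (integrable_finMax (hi _)) (integrable_logSumExp (hi _))
            fun g => finMax_le_logSumExp _
      _ ≤ ∫ g, logSumExp ((β • A) *ᵥ g) ∂(stdGaussianPi κ) := hcomp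
      _ ≤ ∫ g, (finMax ((β • A) *ᵥ g) + Real.log (Fintype.card ι)) ∂(stdGaussianPi κ) :=
          integral_mono (integrable_logSumExp (hi _))
            ((integrable_finMax (hi _)).add (integrable_const _)) fun g => logSumExp_le _
      _ = β * ∫ g, finMax (A *ᵥ g) ∂(stdGaussianPi κ) + Real.log (Fintype.card ι) := by
          rw [integral_add (integrable_finMax (hi _)) (integrable_const _)]
          simp_rw [hscale, integral_const_mul]
          simp
  by_contra! hlt
  set a := ∫ g, finMax (A *ᵥ g) ∂(stdGaussianPi κ)
  set d := ∫ g, finMax (D *ᵥ g) ∂(stdGaussianPi κ)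
  have hL : 0 ≤ Real.log (Fintype.card ι) := Real.log_natCast_nonneg _
  have hpos : 0 < d - a := sub_pos.2 hlt
  have := key ((Real.log (Fintype.card ι) + 1) / (d - a)) (by positivity)
  have e : (Real.log (Fintype.card ι) + 1) / (d - a) * (d - a) =
      Real.log (Fintype.card ι) + 1 := div_mul_cancel₀ _ hpos.ne'
  linarith

end Comparison

section GaussianVector

open Matrix WithLp
open scoped MatrixOrder

variable {Ω : Type*} [MeasureSpace Ω] {ι : Type*} [Fintype ι]

lemma IsJointGaussian.hasGaussianLaw_toLp {X : ι → Ω → ℝ} (hX : IsJointGaussian X)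
    (hmeas : ∀ i, Measurable (X i)) :
    HasGaussianLaw (fun ω => (toLp 2 fun i => X i ω : EuclideanSpace ℝ ι)) ℙ := by
  classical
  have hm : Measurable fun ω => (toLp 2 fun i => X i ω : EuclideanSpace ℝ ι) :=
    (PiLp.continuous_toLp 2 _).measurable.comp (measurable_pi_iff.2 hmeas)
  refine ⟨isGaussian_of_map_eq_gaussianReal fun L => ?_⟩
  rw [Measure.map_map L.continuous.measurable hm]
  obtain ⟨m, v, h⟩ := hX fun i => L (EuclideanSpace.basisFun ι ℝ i)
  refine ⟨m, v, ?_⟩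
  rw [← h]
  congr 1 with ω
  have := (EuclideanSpace.basisFun ι ℝ).sum_repr (toLp 2 fun i => X i ω)
  rw [Function.comp_apply, ← this, map_sum]
  simp [mul_comm]

lemma IsJointGaussian.comp_injective {X : ι → Ω → ℝ} (hX : IsJointGaussian X) {ι' : Type*}
    [Fintype ι'] {f : ι' → ι} (hf : Function.Injective f) :
    IsJointGaussian fun i => X (f i) := by
  classical
  intro c
  obtain ⟨m, v, h⟩ := hX (Function.extend f c 0)
  refine ⟨m, v, ?_⟩
  rw [← h]
  congr 1 with ω
  rw [← Finset.sum_subset (Finset.subset_univ (Finset.univ.image f)),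
    Finset.sum_image hf.injOn]
  · simp [hf.extend_apply]
  · intro i _ hi
    rw [Function.extend_apply', Pi.zero_apply, zero_mul]
    simpa using hi

variable [IsProbabilityMeasure (ℙ : Measure Ω)]

/-- A centered Gaussian vector has the law of a linear image of a standard Gaussian vector. -/
lemma IsJointGaussian.exists_map_eq_map_mulVec {X : ι → Ω → ℝ} (hX : IsJointGaussian X)
    (hmeas : ∀ i, Measurable (X i)) (hL2 : ∀ i, MemLp (X i) 2 ℙ) (hmean : ∀ i, ∫ ω, X i ω = 0) :
    ∃ A : Matrix ι ι ℝ, (∀ i j, (A * Aᵀ) i j = cov[X i, X j; ℙ]) ∧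
      Measure.map (fun ω i => X i ω) ℙ = (stdGaussianPi ι).map fun g => A *ᵥ g := by
  classical
  set S : Matrix ι ι ℝ := Matrix.of fun i j => cov[X i, X j; ℙ]
  have hm : Measurable fun ω i => X i ω := measurable_pi_iff.2 hmeas
  have hmE : Measurable fun ω => (toLp 2 fun i => X i ω : EuclideanSpace ℝ ι) :=
    (PiLp.continuous_toLp 2 _).measurable.comp hm
  have hG := hX.hasGaussianLaw_toLp hmeas
  have := hG.isGaussian_map
  have hbil : ∀ x y : EuclideanSpace ℝ ι,
      covarianceBilin (Measure.map (fun ω => toLp 2 fun i => X i ω) ℙ) x y =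
        x ⬝ᵥ S *ᵥ y := fun x y => by
    rw [covarianceBilin_apply_pi hL2]
    simp only [dotProduct, Matrix.mulVec, Finset.mul_sum, S, Matrix.of_apply]
    exact Finset.sum_congr rfl fun i _ => Finset.sum_congr rfl fun j _ => by ring
  have hS : S.PosSemidef := by
    refine Matrix.PosSemidef.of_dotProduct_mulVec_nonneg ?_ fun x => ?_
    · ext i j
      simp [S, covariance_comm]
    · have := covarianceBilin_self_nonneg
        (μ := Measure.map (fun ω => (toLp 2 fun i => X i ω : EuclideanSpace ℝ ι)) ℙ) (toLp 2 x)
      rw [hbil] at this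
      simpa using this
  have hlaw : Measure.map (fun ω => (toLp 2 fun i => X i ω : EuclideanSpace ℝ ι)) ℙ =
      multivariateGaussian 0 S := by
    refine IsGaussian.ext ?_ ?_
    · rw [integral_id_multivariateGaussian', integral_map hmE.aemeasurable (by fun_prop)]
      ext i
      have := (EuclideanSpace.proj (𝕜 := ℝ) i).integral_comp_comm hG.integrable
      simpa [hmean] using this.symm
    · ext x y
      rw [hbil, covarianceBilin_multivariateGaussian hS]
  refine ⟨CFC.sqrt S, fun i j => ?_, ?_⟩
  · have hsa : (CFC.sqrt S)ᵀ = CFC.sqrt S := by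
      have := (CFC.sqrt_nonneg S).isSelfAdjoint
      simpa [IsSelfAdjoint, Matrix.star_eq_conjTranspose] using this
    rw [hsa, CFC.sqrt_mul_sqrt_self _ hS.nonneg]
    rfl
  · have h := congrArg (Measure.map (ofLp : EuclideanSpace ℝ ι → ι → ℝ)) hlaw
    have hof : Measurable (ofLp : EuclideanSpace ℝ ι → ι → ℝ) :=
      (PiLp.continuous_ofLp 2 _).measurable
    rw [Measure.map_map hof hmE, multivariateGaussian, ← map_pi_eq_stdGaussian,
      Measure.map_map hof (by fun_prop),
      Measure.map_map (hof.comp (by fun_prop)) (by fun_prop)] at h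
    refine h.trans ?_
    congr 1 with g i
    simp

end GaussianVector

section GaussianVector

open Matrix

lemma measurePreserving_comp_inl_stdGaussianPi (ι κ : Type*) [Fintype ι] [Fintype κ] :
    MeasurePreserving (fun g : ι ⊕ κ → ℝ => g ∘ Sum.inl) (stdGaussianPi (ι ⊕ κ))
      (stdGaussianPi ι) :=
  measurePreserving_fst.comp
    (measurePreserving_sumPiEquivProdPi (X := fun _ : ι ⊕ κ => ℝ) fun _ => gaussianReal 0 1)

lemma measurePreserving_comp_inr_stdGaussianPi (ι κ : Type*) [Fintype ι] [Fintype κ] :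
    MeasurePreserving (fun g : ι ⊕ κ → ℝ => g ∘ Sum.inr) (stdGaussianPi (ι ⊕ κ))
      (stdGaussianPi κ) :=
  measurePreserving_snd.comp
    (measurePreserving_sumPiEquivProdPi (X := fun _ : ι ⊕ κ => ℝ) fun _ => gaussianReal 0 1)

variable {Ω : Type*} [MeasureSpace Ω]

lemma memLp_two_of_map_eq {Y : Ω → ℝ} (hY : Measurable Y)
    (h : Measure.map Y ℙ = gaussianReal 0 1) : MemLp Y 2 ℙ := by
  have := (memLp_map_measure_iff (μ := ℙ) (f := Y) (g := id) (p := 2) (by fun_prop)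
    hY.aemeasurable).1 (by rw [h]; exact IsGaussian.memLp_two_id)
  simpa using this

lemma integral_eq_zero_of_map_eq {Y : Ω → ℝ} (hY : Measurable Y)
    (h : Measure.map Y ℙ = gaussianReal 0 1) : ∫ ω, Y ω = 0 := by
  have := integral_map (μ := ℙ) hY.aemeasurable (f := id) (by fun_prop)
  rw [h] at this
  simpa using this.symm

variable [IsProbabilityMeasure (ℙ : Measure Ω)]

lemma covar_eq_covariance {Y Z : Ω → ℝ} (hY : MemLp Y 2 ℙ) (hZ : MemLp Z 2 ℙ) :
    covar Y Z = cov[Y, Z; ℙ] :=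
  (covariance_eq_sub hY hZ).symm

lemma covar_self_of_map_eq {Y : Ω → ℝ} (hY : Measurable Y)
    (h : Measure.map Y ℙ = gaussianReal 0 1) : covar Y Y = 1 := by
  have hL := memLp_two_of_map_eq hY h
  have := variance_map (μ := ℙ) (X := id) (Y := Y) (by fun_prop) hY.aemeasurable
  rw [h, variance_id_gaussianReal] at this
  rw [covar_eq_covariance hL hL, covariance_self hY.aemeasurable]
  simpa using this.symm

/-- The expected maximum of standard Gaussian variables with pairwise covariances at most `τ`
dominates `√(1 - τ)` times the expected maximum of independent ones. -/
lemma IsJointGaussian.sqrt_mul_integral_finMax_le {ι : Type*} [Fintype ι] [Nonempty ι]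
    {X : ι → Ω → ℝ} (hX : IsJointGaussian X) (hmeas : ∀ i, Measurable (X i))
    (hmarg : ∀ i, Measure.map (X i) ℙ = gaussianReal 0 1) {τ : ℝ} (hτ : τ ≤ 1)
    (hcov : ∀ i j, i ≠ j → covar (X i) (X j) ≤ τ) :
    Real.sqrt (1 - τ) * ∫ g, finMax g ∂(stdGaussianPi ι) ≤ ∫ ω, finMax fun i => X i ω := by
  classical
  have hL2 := fun i => memLp_two_of_map_eq (hmeas i) (hmarg i)
  obtain ⟨A, hA, hlaw⟩ := hX.exists_map_eq_map_mulVec hmeas hL2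
    fun i => integral_eq_zero_of_map_eq (hmeas i) (hmarg i)
  have hA' : ∀ i j, (A * Aᵀ) i j = covar (X i) (X j) := fun i j => by
    rw [hA, covar_eq_covariance (hL2 i) (hL2 j)]
  have hmax : ∫ ω, finMax (fun i => X i ω) = ∫ g, finMax (A *ᵥ g) ∂(stdGaussianPi ι) := by
    have e1 := integral_map (μ := ℙ) (measurable_pi_iff.2 hmeas).aemeasurable
      (measurable_finMax (ι := ι)).aestronglyMeasurable
    have e2 := integral_map (μ := stdGaussianPi ι) (measurable_mulVec A).aemeasurable
      (measurable_finMax (ι := ι)).aestronglyMeasurable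
    rw [← e1, ← e2, hlaw]
  have hcomp := integral_finMax_le_of_increments (κ := ι ⊕ ι) (Matrix.fromCols A 0)
    (Matrix.fromCols 0 (Real.sqrt (1 - τ) • (1 : Matrix ι ι ℝ)))
    (by simp [Matrix.transpose_fromCols, Matrix.fromCols_mul_fromRows])
    (fun i j => by
      simp only [Matrix.transpose_fromCols, Matrix.fromCols_mul_fromRows, Matrix.transpose_zero,
        Matrix.mul_zero, Matrix.transpose_smul, Matrix.transpose_one,
        Matrix.mul_smul, Matrix.mul_one, smul_smul, zero_add, add_zero, Matrix.smul_apply,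
        smul_eq_mul, Real.mul_self_sqrt (sub_nonneg.2 hτ), Matrix.one_apply_eq, hA',
        covar_self_of_map_eq (hmeas i) (hmarg i)]
      by_cases hij : i = j
      · subst hij
        simp [covar_self_of_map_eq (hmeas i) (hmarg i)]
      · simp only [Matrix.one_apply_ne hij]
        linarith [hcov i j hij])
  have hl : ∫ g, finMax (Matrix.fromCols A 0 *ᵥ g) ∂(stdGaussianPi (ι ⊕ ι)) =
      ∫ g, finMax (A *ᵥ g) ∂(stdGaussianPi ι) := by
    have hmp := measurePreserving_comp_inl_stdGaussianPi ι ι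
    have hm : Measurable fun g => finMax (A *ᵥ g) := measurable_finMax.comp (measurable_mulVec A)
    rw [← hmp.map_eq, integral_map hmp.measurable.aemeasurable hm.aestronglyMeasurable]
    simp [Matrix.fromCols_mulVec]
  have hr : ∫ g, finMax (Matrix.fromCols 0 (Real.sqrt (1 - τ) • (1 : Matrix ι ι ℝ)) *ᵥ g)
      ∂(stdGaussianPi (ι ⊕ ι)) = Real.sqrt (1 - τ) * ∫ g, finMax g ∂(stdGaussianPi ι) := by
    have hmp := measurePreserving_comp_inr_stdGaussianPi ι ι
    rw [← integral_const_mul, ← hmp.map_eq, integral_map hmp.measurable.aemeasurable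
      (measurable_finMax.const_mul _).aestronglyMeasurable]
    refine integral_congr_ae (ae_of_all _ fun g => ?_)
    simp only [← finMax_const_mul (Real.sqrt_nonneg (1 - τ))]
    congr 1
    ext i
    simp [Matrix.fromCols_mulVec, Matrix.smul_mulVec]
  rw [hmax, ← hl, ← hr]
  exact hcomp

end GaussianVector

/-- A finite set all of whose points have at most `n` neighbours for a reflexive symmetric
relation contains an independent subset of at least the `n`-th part of its size. -/
lemma exists_independent_subset {α : Type*} (r : α → α → Prop)
    (hrefl : ∀ i, r i i) (hsymm : ∀ i j, r i j → r j i) (S : Finset α) {n : ℕ}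
    (hn : ∀ i ∈ S, ∀ K ⊆ S, (∀ k ∈ K, r k i) → K.card ≤ n) :
    ∃ T ⊆ S, (∀ i ∈ T, ∀ j ∈ T, i ≠ j → ¬ r i j) ∧ S.card ≤ T.card * n := by
  classical
  obtain ⟨T, hT, hmax⟩ := Set.exists_max_image
    {T : Finset α | T ⊆ S ∧ ∀ i ∈ T, ∀ j ∈ T, i ≠ j → ¬ r i j} Finset.card
    (S.powerset.finite_toSet.subset fun T hT => by simpa using hT.1) ⟨∅, by simp⟩
  refine ⟨T, hT.1, hT.2, ?_⟩
  have hcover : S ⊆ T.biUnion fun i => S.filter fun k => r k i := by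
    intro k hk
    by_contra hnot
    have hno : ∀ i ∈ T, ¬ r k i := fun i hi hr =>
      hnot (Finset.mem_biUnion.2 ⟨i, hi, Finset.mem_filter.2 ⟨hk, hr⟩⟩)
    have hkT : k ∉ T := fun h => hno k h (hrefl k)
    have := hmax (insert k T) (by
      refine ⟨Finset.insert_subset hk hT.1, fun i hi j hj hij => ?_⟩
      rcases Finset.mem_insert.1 hi with rfl | hi'
      · exact hno j ((Finset.mem_insert.1 hj).resolve_left (Ne.symm hij))
      · rcases Finset.mem_insert.1 hj with rfl | hj'
        · exact fun hr => hno i hi' (hsymm _ _ hr)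
        · exact hT.2 i hi' j hj' hij)
    rw [Finset.card_insert_of_notMem hkT] at this
    omega
  refine (Finset.card_le_card hcover).trans (Finset.card_biUnion_le_card_mul _ _ _ fun i hi => ?_)
  exact hn i (hT.1 hi) _ (Finset.filter_subset _ _) fun k hk => (Finset.mem_filter.1 hk).2

section Quantile

lemma stdGaussianQuantile_half : stdGaussianQuantile (1 / 2) = 0 := by
  rw [← stdGaussianCDF_zero, stdGaussianQuantile_stdGaussianCDF]

lemma stdGaussianQuantile_zero : stdGaussianQuantile 0 = 0 := by
  have : {x : ℝ | 0 ≤ stdGaussianCDF x} = Set.univ :=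
    Set.eq_univ_of_forall stdGaussianCDF_nonneg
  rw [stdGaussianQuantile, this]
  exact Real.sInf_of_not_bddBelow not_bddBelow_univ

lemma stdGaussianQuantile_pos {y : ℝ} (h : 1 / 2 < y) (h1 : y < 1) :
    0 < stdGaussianQuantile y := by
  rw [← strictMono_stdGaussianCDF.lt_iff_lt, stdGaussianCDF_zero,
    stdGaussianCDF_stdGaussianQuantile (by linarith) h1]
  exact h

lemma stdGaussianQuantile_one_sub_inv_natCast {q : ℕ} (h0 : q ≠ 0) (h : q ≤ 2) :
    stdGaussianQuantile (1 - 1 / (q : ℝ)) = 0 := by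
  obtain rfl | rfl : q = 1 ∨ q = 2 := by omega
  · simpa using stdGaussianQuantile_zero
  · rw [← stdGaussianQuantile_half]
    norm_num

end Quantile

section MaximumOverSubset

variable {Ω : Type*} [MeasureSpace Ω] {α : Type*} {X : α → Ω → ℝ}

lemma integrable_sup' (hX : ∀ j, Integrable (X j) ℙ) {S : Finset α} (hS : S.Nonempty) :
    Integrable (fun ω => S.sup' hS fun j => X j ω) ℙ := by
  have : Nonempty S := hS.to_subtype
  refine (integrable_finMax (X := fun ω (j : S) => X j ω) fun j => hX j).congr
    (ae_of_all _ fun ω => ?_)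
  exact le_antisymm (finMax_le_iff.2 fun j => Finset.le_sup' (fun j => X j ω) j.2)
    (Finset.sup'_le _ _ fun j hj => le_finMax (fun j : S => X j ω) ⟨j, hj⟩)

lemma integral_sup'_nonneg (hX : ∀ j, Integrable (X j) ℙ) (h0 : ∀ j, ∫ ω, X j ω = 0)
    {S : Finset α} (hS : S.Nonempty) : 0 ≤ ∫ ω, S.sup' hS fun j => X j ω := by
  obtain ⟨j, hj⟩ := id hS
  rw [← h0 j]
  exact integral_mono (hX j) (integrable_sup' hX hS)
    fun ω => Finset.le_sup' (fun j => X j ω) hj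

variable [Fintype α] [IsProbabilityMeasure (ℙ : Measure Ω)]

/-- If every variable of a standard Gaussian family over `S` has covariance greater than `τ` with
at most `n` others, itself included, the expected maximum over `S` is bounded below in terms of
any `u ≥ 0` with `Φ(u) ≤ x / (x + 1)`, where `x = |S| / n`. -/
lemma IsJointGaussian.le_integral_sup' (hX : IsJointGaussian X)
    (hmeas : ∀ j, Measurable (X j)) (hmarg : ∀ j, Measure.map (X j) ℙ = gaussianReal 0 1)
    {τ : ℝ} (hτ : τ < 1) {n : ℕ}
    (hn : ∀ i, Nat.card {k : α | τ < covar (X k) (X i)} ≤ n)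
    {S : Finset α} (hS : S.Nonempty) {u : ℝ} (hu : 0 ≤ u)
    (hΦ : stdGaussianCDF u ≤ 1 - 1 / ((S.card : ℝ) / n + 1)) :
    Real.sqrt (1 - τ) * (u * (1 - (2 : ℝ) ^ (-((S.card : ℝ) / n))) -
      Real.sqrt (2 / Real.pi) * (2 : ℝ) ^ (-((S.card : ℝ) / n))) ≤
      ∫ ω, S.sup' hS fun j => X j ω := by
  obtain ⟨T, hTS, hTi, hcard⟩ := exists_independent_subset
    (fun i j => τ < covar (X i) (X j))
    (fun i => by rwa [covar_self_of_map_eq (hmeas i) (hmarg i)])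
    (fun i j h => by simpa [covar, mul_comm] using h) S (n := n) fun i _ K _ hK => by
      rw [← Set.ncard_coe_finset]
      exact (Set.ncard_le_ncard (fun k hk => hK k hk) (Set.toFinite _)).trans (hn i)
  have hSpos : 0 < S.card := hS.card_pos
  have hTpos : 0 < T.card := Nat.pos_of_mul_pos_right (hSpos.trans_le hcard)
  have hnpos : 0 < n := Nat.pos_of_mul_pos_left (hSpos.trans_le hcard)
  have hT : T.Nonempty := Finset.card_pos.1 hTpos
  have : Nonempty T := hT.to_subtype
  have hnR : (0 : ℝ) < n := by exact_mod_cast hnpos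
  have hx : (S.card : ℝ) / n ≤ T.card := by
    rw [div_le_iff₀ hnR]
    exact_mod_cast hcard
  set x := (S.card : ℝ) / n
  have hx0 : 0 ≤ x := by positivity
  have h_int := fun j => (memLp_two_of_map_eq (hmeas j) (hmarg j)).integrable one_le_two
  have hiid := le_integral_finMax_stdGaussianPi (ι := T) hu (by
    refine hΦ.trans ?_
    rw [Fintype.card_coe, show (T.card : ℝ) / (T.card + 1) = 1 - 1 / ((T.card : ℝ) + 1) by
      field_simp; ring]
    gcongr)
  rw [Fintype.card_coe] at hiid
  have hpow : ((1 : ℝ) / 2) ^ T.card ≤ (2 : ℝ) ^ (-x) := by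
    rw [one_div, inv_pow, ← Real.rpow_natCast, ← Real.rpow_neg two_pos.le]
    exact Real.rpow_le_rpow_of_exponent_le one_le_two (neg_le_neg hx)
  have hsf := (hX.comp_injective (f := fun j : T => (j : α))
    Subtype.val_injective).sqrt_mul_integral_finMax_le (fun j => hmeas j) (fun j => hmarg j)
    hτ.le fun i j hij => not_lt.1 (hTi i i.2 j j.2 (Subtype.coe_injective.ne hij))
  calc Real.sqrt (1 - τ) * (u * (1 - (2 : ℝ) ^ (-x)) - Real.sqrt (2 / Real.pi) * (2 : ℝ) ^ (-x))
      ≤ Real.sqrt (1 - τ) * ∫ g, finMax g ∂(stdGaussianPi T) := by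
        refine mul_le_mul_of_nonneg_left (le_trans ?_ hiid) (Real.sqrt_nonneg _)
        gcongr
    _ ≤ ∫ ω, finMax fun j : T => X j ω := hsf
    _ ≤ ∫ ω, S.sup' hS fun j => X j ω :=
        integral_mono (integrable_finMax fun j => h_int j) (integrable_sup' h_int hS) fun ω =>
          finMax_le_iff.2 fun j => Finset.le_sup' (fun j => X j ω) (hTS j.2)

end MaximumOverSubset

/-- Sudakov–Fernique lower bound for UDD Gaussian arrays: for every subset `S_p ⊆ [p]`
with `q = |S_p|` and every `τ ∈ (0,1)`,
`E[max_{j∈S_p} ε_p(j)/u_q] ≥ (u_{q/N(τ)+1}/u_q) √(1-τ)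
  (1 - 2^{-q/N(τ)} - (√(2/π)/u_{q/N(τ)+1}) 2^{-q/N(τ)})`,
where `u_x = Φ^{←}(1 - 1/x)`. -/
theorem expected_max_lower_bound_UDD
    {Ω : Type*} [MeasureSpace Ω] [IsProbabilityMeasure (ℙ : Measure Ω)]
    (ε : (p : ℕ) → Fin p → Ω → ℝ)
    (hmeas : ∀ p i, Measurable (ε p i))
    (hGauss : ∀ p, IsJointGaussian (ε p))
    (hmarg : ∀ p i, Measure.map (ε p i) ℙ = gaussianReal 0 1)
    (N : ℝ → ℕ)
    (hUDD : ∀ τ : ℝ, 0 < τ → ∀ p : ℕ, ∀ i : Fin p,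
      Nat.card {k : Fin p | τ < covar (ε p k) (ε p i)} ≤ N τ)
    (p : ℕ) (S : Finset (Fin p)) (hS : S.Nonempty) (τ : ℝ) (hτ : τ ∈ Set.Ioo (0 : ℝ) 1) :
    (stdGaussianQuantile (1 - 1 / ((S.card : ℝ) / (N τ : ℝ) + 1)) /
          stdGaussianQuantile (1 - 1 / (S.card : ℝ))) *
        Real.sqrt (1 - τ) *
        (1 - (2 : ℝ) ^ (-((S.card : ℝ) / (N τ : ℝ))) -
          (Real.sqrt (2 / Real.pi) /
              stdGaussianQuantile (1 - 1 / ((S.card : ℝ) / (N τ : ℝ) + 1))) *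
            (2 : ℝ) ^ (-((S.card : ℝ) / (N τ : ℝ)))) ≤
      ∫ ω, (S.sup' hS fun j => ε p j ω) / stdGaussianQuantile (1 - 1 / (S.card : ℝ)) ∂ℙ := by
  have h_int := fun j => (memLp_two_of_map_eq (hmeas p j) (hmarg p j)).integrable one_le_two
  have hmax0 : 0 ≤ ∫ ω, S.sup' hS fun j => ε p j ω :=
    integral_sup'_nonneg h_int (fun j => integral_eq_zero_of_map_eq (hmeas p j) (hmarg p j)) hS
  have hq : 0 < S.card := hS.card_pos
  rw [integral_div]
  rcases le_or_gt S.card 2 with hq2 | hq2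
  · rw [stdGaussianQuantile_one_sub_inv_natCast hq.ne' hq2]
    simp
  have hqR : (3 : ℝ) ≤ S.card := by exact_mod_cast hq2
  have hq3 : 1 / (S.card : ℝ) ≤ 1 / 3 := one_div_le_one_div_of_le (by norm_num) hqR
  have huq : 0 < stdGaussianQuantile (1 - 1 / (S.card : ℝ)) :=
    stdGaussianQuantile_pos (by linarith) (by linarith [show 0 < 1 / (S.card : ℝ) by positivity])
  have hN : 0 < N τ := by
    obtain ⟨i, -⟩ := id hS
    refine lt_of_lt_of_le ?_ (hUDD τ hτ.1 p i)
    have : Nonempty {k : Fin p | τ < covar (ε p k) (ε p i)} :=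
      ⟨⟨i, by simpa [covar_self_of_map_eq (hmeas p i) (hmarg p i)] using hτ.2⟩⟩
    exact Nat.card_pos
  have hx0 : 0 < (S.card : ℝ) / N τ := by positivity
  have hΦ0 : 0 < 1 - 1 / ((S.card : ℝ) / N τ + 1) := by
    rw [sub_pos, div_lt_one (by positivity)]
    linarith
  have hΦ1 : 1 - 1 / ((S.card : ℝ) / N τ + 1) < 1 := sub_lt_self _ (by positivity)
  have hbound := (hGauss p).le_integral_sup' (hmeas p) (hmarg p) hτ.2 (hUDD τ hτ.1 p) hS
    (u := stdGaussianQuantile (1 - 1 / ((S.card : ℝ) / N τ + 1)))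
  rw [stdGaussianCDF_stdGaussianQuantile hΦ0 hΦ1] at hbound
  set x := (S.card : ℝ) / N τ
  set u := stdGaussianQuantile (1 - 1 / (x + 1))
  have hpow : (2 : ℝ) ^ (-x) ≤ 1 := Real.rpow_le_one_of_one_le_of_nonpos one_le_two (by linarith)
  rw [div_mul_eq_mul_div, div_mul_eq_mul_div]
  refine div_le_div_of_nonneg_right ?_ huq.le
  rcases lt_trichotomy u 0 with hu | hu | hu
  · refine le_trans (mul_nonpos_of_nonpos_of_nonneg
      (mul_nonpos_of_nonpos_of_nonneg hu.le (Real.sqrt_nonneg _)) ?_) hmax0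
    have : Real.sqrt (2 / Real.pi) / u * (2 : ℝ) ^ (-x) ≤ 0 :=
      mul_nonpos_of_nonpos_of_nonneg
        (div_nonpos_of_nonneg_of_nonpos (Real.sqrt_nonneg _) hu.le) (by positivity)
    linarith
  · simpa [hu] using hmax0
  · refine le_trans (le_of_eq ?_) (hbound hu.le le_rfl)
    field_simp
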